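/- arXiv:2103.05202 — 8 statements merged into one kernel-verified Lean document; each statement's English description precedes it below -/
import Mathlib

section
/- For every integer s ≥ 1, if I₁, I₂, …, I_s are (not necessarily distinct) independent sets, each of size s, in the cycle C_{2s+1}, then there exist vertices x₁, …, x_s with x_j ∈ I_j for each 1 ≤ j ≤ s, all distinct, such that {x₁, …, x_s} is an independent set of size s in C_{2s+1}. (Equivalently, f_{C_{2s+1}}(s,s) ≤ s, which together with the trivial lower bound gives f_{C_{2s+1}}(s,s) = s.) -/
/-!
Halving vertices modulo `2s+1` turns an independent `s`-set of the cycle into an arc of `s`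
consecutive residues (`exists_arc`). So each `I j` is given by the starting point `b j` of an arc,
and it suffices to find an arc `c, c+1, …, c+s-1` and to match its points bijectively with the
given arcs, each point lying in its arc.

Call a residue `p` *good* if, for every `k`, at most `k` of the starting points lie in
`p, p+1, …, p+k`. By a version of the cycle lemma (`card_good`), at least `2s+1-s = s+1` residues
are good. The same holds in the reversed orientation, and `2(s+1) > 2s+1`, so there is an `a` such
that `a+1` is good and `a` is good in the reversed orientation (`exists_cut`). Cut the circle
between `a` and `a+1`, sort the arcs by their starting points from `a+1` on, and give the arc of
rank `r` the point `a+s+1+r`. If that arc starts at `a+1+u`, goodness on the two sides of the cut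
gives `u-s ≤ r < u`, which says exactly that the point lies in the arc.
-/

open Finset

namespace OddCycleRainbow

open Classical in
/-- The residues `p` such that, for every `k`, at most `k` of the points `b i`, `i ∈ S`
(counted with multiplicity), lie in the arc `p, p+1, …, p+k`. -/
noncomputable def good {M : ℕ} [NeZero M] {ι : Type*} (b : ι → ZMod M) (S : Finset ι) : Finset (ZMod M) :=
  {p | ∀ k : ℕ, #{i ∈ S | (b i - p).val ≤ k} ≤ k}

/-- A cycle lemma: each point of the family spoils at most one residue, namely
the first residue that was still good when walking backwards from that point. -/
theorem card_good {M : ℕ} [NeZero M] {ι : Type*} [DecidableEq ι] (b : ι → ZMod M)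
    (S : Finset ι) : M ≤ #(good b S) + #S := by
  induction S using Finset.induction_on with
  | empty => simp [good, ZMod.card]
  | insert i₀ S hi ih =>
    rw [card_insert_of_notMem hi]
    rcases (good b S).eq_empty_or_nonempty with h | h
    · rw [h] at ih
      simp at ih
      omega
    obtain ⟨p, hp, hmin⟩ := exists_min_image (good b S) (fun p => (b i₀ - p).val) h
    have hsub : good b S ⊆ insert p (good b (insert i₀ S)) := by
      intro p' hp'
      by_cases hpp : p' = p
      · simp [hpp]
      refine mem_insert_of_mem ?_
      have hle := hmin p' hp'
      simp only [good, mem_filter, mem_univ, true_and] at hp hp' ⊢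
      intro k
      rw [filter_insert]
      split_ifs with hk
      · refine (card_insert_le _ _).trans ?_
        have hD : (p - p').val = (b i₀ - p').val - (b i₀ - p).val := by
          rw [← ZMod.val_sub hle]; congr 1; ring
        have hpos : 0 < (p - p').val := by
          rw [Nat.pos_iff_ne_zero, Ne, ZMod.val_eq_zero, sub_eq_zero]
          exact fun h => hpp h.symm
        set D := (p - p').val with hDdef
        -- The arc of length `k+1` from `p'` splits at `p` into arcs of lengths `D` and `k-D+1`.
        have hcover : {i ∈ S | (b i - p').val ≤ k} ⊆
            {i ∈ S | (b i - p').val ≤ D - 1} ∪ {i ∈ S | (b i - p).val ≤ k - D} := by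
          intro i
          simp only [mem_union, mem_filter]
          rintro ⟨hiS, hik⟩
          by_cases hlt : (b i - p').val ≤ D - 1
          · exact Or.inl ⟨hiS, hlt⟩
          · refine Or.inr ⟨hiS, ?_⟩
            have hge : (p - p').val ≤ (b i - p').val := by omega
            have := ZMod.val_sub hge
            rw [show b i - p' - (p - p') = b i - p by ring] at this
            omega
        have h1 := (card_le_card hcover).trans (card_union_le _ _)
        have h2 := hp' (D - 1)
        have h3 := hp (k - D)
        omega
      · exact hp' k
    have := (card_le_card hsub).trans (card_insert_le _ _)
    omega

/-- Some cut, between `a` and `a+1`, is good on both of its sides. -/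
theorem exists_cut {s : ℕ} (b : Fin s → ZMod (2 * s + 1)) :
    ∃ a : ZMod (2 * s + 1),
      (∀ k : ℕ, #{i | (b i - (a + 1)).val ≤ k} ≤ k) ∧
      (∀ k : ℕ, #{i | (a - b i).val ≤ k} ≤ k) := by
  have h1 := card_good b univ
  have h2 := card_good (fun i => - b i) univ
  simp only [card_univ, Fintype.card_fin] at h1 h2
  have hinj : Function.Injective (fun p : ZMod (2 * s + 1) => -p + 1) := by
    intro p q h
    simpa using h
  have h3 := card_image_of_injective (good (fun i => - b i) univ) hinj
  have : ¬ Disjoint (good b univ) ((good (fun i => - b i) univ).image (fun p => -p + 1)) := by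
    intro hd
    have h4 := card_union_of_disjoint hd
    have h5 := card_le_univ (good b univ ∪ (good (fun i => - b i) univ).image (fun p => -p + 1))
    rw [ZMod.card] at h5
    omega
  obtain ⟨q, hq, hq'⟩ := not_disjoint_iff.mp this
  obtain ⟨p, hp, rfl⟩ := mem_image.mp hq'
  simp only [good, mem_filter, mem_univ, true_and] at hq hp
  refine ⟨-p, hq, fun k => ?_⟩
  simpa only [show ∀ i, -b i - p = -p - b i from fun i => by ring] using hp k

/-- After halving, an independent `s`-set of the cycle is an arc of `s` consecutive residues. -/
theorem exists_arc {s : ℕ} (hs : 1 ≤ s) (I : Finset (ZMod (2 * s + 1)))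
    (hcard : #I = s) (hindep : ∀ x ∈ I, x + 1 ∉ I) :
    ∃ b : ZMod (2 * s + 1), ∀ k : ℕ, k < s → 2 * (b + k) ∈ I := by
  have hM : (2 * s + 1 : ZMod (2 * s + 1)) = 0 := by
    exact_mod_cast ZMod.natCast_self (2 * s + 1)
  have hhalf : ∀ x : ZMod (2 * s + 1), 2 * ((s + 1) * x) = x := by
    intro x; linear_combination x * hM
  have hhalf' : ∀ x : ZMod (2 * s + 1), (s + 1) * (2 * x) = x := by
    intro x; linear_combination x * hM
  obtain ⟨J, hJ⟩ : ∃ J : Finset (ZMod (2 * s + 1)), J = I.image (fun x => ((s : ZMod (2 * s + 1)) + 1) * x) := ⟨_, rfl⟩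
  have hJmem : ∀ y, y ∈ J ↔ 2 * y ∈ I := by
    intro y
    rw [hJ, mem_image]
    constructor
    · rintro ⟨x, hx, rfl⟩
      rwa [hhalf]
    · exact fun h => ⟨_, h, hhalf' y⟩
  have hJcard : #J = s := by
    rw [hJ, card_image_of_injective, hcard]
    intro x y h
    have := congrArg (2 * ·) h
    simpa only [hhalf] using this
  -- Translation by `s` takes both `J` and `J + 1` into the complement of `J`.
  have hout : ∀ y ∈ J, y + s ∉ J ∧ y + 1 + s ∉ J := by
    intro y hy
    rw [hJmem] at hy
    refine ⟨fun h => ?_, fun h => ?_⟩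
    · rw [hJmem] at h
      apply hindep _ h
      convert hy using 1
      linear_combination hM
    · rw [hJmem] at h
      apply hindep _ hy
      convert h using 1
      linear_combination -hM
  have hunion : #(J ∪ J.image (· + 1)) ≤ s + 1 := by
    have hsub : (J ∪ J.image (· + 1)).image (· + (s : ZMod (2 * s + 1))) ⊆ Jᶜ := by
      intro z hz
      simp only [mem_image, mem_union] at hz
      rw [mem_compl]
      obtain ⟨w, hw | ⟨y, hy, rfl⟩, rfl⟩ := hz
      · exact (hout w hw).1
      · exact (hout y hy).2
    have := card_le_card hsub
    rw [card_image_of_injective _ (add_left_injective _), card_compl, ZMod.card, hJcard] at this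
    omega
  have hdiff : #(J.image (· + 1) \ J) ≤ 1 := by
    have := card_union_of_disjoint (disjoint_sdiff (s := J) (t := J.image (· + 1)))
    rw [union_sdiff_self_eq_union] at this
    omega
  have huniq : ∀ y ∈ J, ∀ z ∈ J, y + 1 ∉ J → z + 1 ∉ J → y = z := by
    intro y hy z hz hy1 hz1
    have := card_le_one.mp hdiff (y + 1) (by simp [hy, hy1]) (z + 1) (by simp [hz, hz1])
    simpa using this
  obtain ⟨e, he, he1⟩ : ∃ e ∈ J, e + 1 ∉ J := by
    by_contra! hcl
    obtain ⟨y, hy⟩ : J.Nonempty := card_pos.mp (by omega)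
    have hall : ∀ k : ℕ, y + k ∈ J := by
      intro k
      induction k with
      | zero => simpa using hy
      | succ k ih => push_cast; rw [← add_assoc]; exact hcl _ ih
    have : J = univ := by
      ext z
      simpa using (by simpa using hall (z - y).val : z ∈ J)
    rw [this, card_univ, ZMod.card] at hJcard
    omega
  have hdown : ∀ k : ℕ, k < s → e - k ∈ J := by
    intro k hk
    by_contra hkJ
    -- Going backwards from the last element `e`, `J` cannot be entered again once it is left.
    have hge : ∀ m : ℕ, k ≤ m → m < 2 * s + 1 → e - m ∉ J := by
      intro m hm
      induction m, hm using Nat.le_induction with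
      | base => exact fun _ => hkJ
      | succ m hm ih =>
        intro hlt hmem
        have hnot := ih (by omega)
        have heq := huniq _ hmem _ he (by
          rwa [show e - ((m + 1 : ℕ) : ZMod (2 * s + 1)) + 1 = e - m by push_cast; ring]) he1
        have h0 : ((m + 1 : ℕ) : ZMod (2 * s + 1)) = 0 := by linear_combination -heq
        rw [ZMod.natCast_eq_zero_iff] at h0
        have := Nat.le_of_dvd (by omega) h0
        omega
    have hsub : J ⊆ (range k).image (fun m : ℕ => e - (m : ZMod (2 * s + 1))) := by
      intro y hy
      rw [mem_image]
      have hy' : e - ((e - y).val : ZMod (2 * s + 1)) = y := by simp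
      refine ⟨(e - y).val, ?_, hy'⟩
      rw [mem_range]
      by_contra hlt
      exact hge (e - y).val (by omega) (ZMod.val_lt _) (by rwa [hy'])
    have := (card_le_card hsub).trans card_image_le
    rw [card_range] at this
    omega
  refine ⟨e - (s - 1 : ℕ), fun k hk => ?_⟩
  rw [← hJmem]
  convert hdown (s - 1 - k) (by omega) using 1
  rw [Nat.cast_sub (by omega : k ≤ s - 1)]
  ring

end OddCycleRainbow

open OddCycleRainbow in
/-- In the cycle `C_{2s+1}` (vertex set `ZMod (2s+1)`, with `x` adjacent to `x+1`),
any `s` independent sets `I 0, …, I (s-1)`, each of size `s`, admit a rainbow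
independent set of size `s`: there are distinct vertices `x j ∈ I j` whose
union is independent. -/
theorem rainbow_independent_sets_in_odd_cycle
    (s : ℕ) (hs : 1 ≤ s)
    (I : Fin s → Finset (ZMod (2 * s + 1)))
    (hcard : ∀ j, (I j).card = s)
    (hindep : ∀ j, ∀ x ∈ I j, x + 1 ∉ I j) :
    ∃ x : Fin s → ZMod (2 * s + 1),
      Function.Injective x ∧
      (∀ j, x j ∈ I j) ∧
      (∀ j l : Fin s, x j + 1 ≠ x l) := by
  choose b hb using fun j => exists_arc hs (I j) (hcard j) (hindep j)
  obtain ⟨a, hF, hB⟩ := exists_cut b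
  obtain ⟨u, hu⟩ : ∃ u : Fin s → ℕ, u = fun j => (b j - (a + 1)).val := ⟨_, rfl⟩
  have huj : ∀ j, u j = (b j - (a + 1)).val := fun j => by rw [hu]
  have hub : ∀ j, (u j : ZMod (2 * s + 1)) = b j - (a + 1) := fun j => by simp [huj]
  have hult : ∀ j, u j < 2 * s + 1 := fun j => by rw [huj]; exact ZMod.val_lt _
  have hM : (2 * s + 1 : ZMod (2 * s + 1)) = 0 := by
    exact_mod_cast ZMod.natCast_self (2 * s + 1)
  have hv : ∀ j, (a - b j).val = 2 * s - u j := by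
    intro j
    have h1 : a - b j = ((2 * s - u j : ℕ) : ZMod (2 * s + 1)) := by
      rw [Nat.cast_sub (by have := hult j; omega), hub]
      push_cast
      linear_combination -hM
    rw [h1, ZMod.val_natCast_of_lt (by omega)]
  let σ := Tuple.sort u
  have hmono : Monotone (u ∘ σ) := Tuple.monotone_sort u
  have hr1 : ∀ j, (σ.symm j : ℕ) < u j := by
    intro j
    have hsub : (Iic (σ.symm j)).map σ.toEmbedding ⊆
        ({i | (b i - (a + 1)).val ≤ u j} : Finset (Fin s)) := by
      intro i hi
      obtain ⟨t, ht, rfl⟩ := mem_map.mp hi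
      have := hmono (mem_Iic.mp ht)
      simpa [← huj] using this
    have := (card_le_card hsub).trans (hF (u j))
    rw [card_map, Fin.card_Iic] at this
    omega
  have hr2 : ∀ j, u j ≤ s + (σ.symm j : ℕ) := by
    intro j
    have hsub : (Ici (σ.symm j)).map σ.toEmbedding ⊆
        ({i | (a - b i).val ≤ 2 * s - u j} : Finset (Fin s)) := by
      intro i hi
      obtain ⟨t, ht, rfl⟩ := mem_map.mp hi
      have h := hmono (mem_Ici.mp ht)
      simp only [Function.comp, Equiv.apply_symm_apply] at h
      simp only [mem_filter, mem_univ, true_and, hv, Equiv.coe_toEmbedding]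
      omega
    have := (card_le_card hsub).trans (hB (2 * s - u j))
    rw [card_map, Fin.card_Ici] at this
    have := hult j
    have := (σ.symm j).isLt
    omega
  refine ⟨fun j => 2 * (a + s + 1 + (σ.symm j : ℕ)), ?_, ?_, ?_⟩
  · intro j l h
    have h' : ((2 * (σ.symm j : ℕ) : ℕ) : ZMod (2 * s + 1)) = (2 * (σ.symm l : ℕ) : ℕ) := by
      push_cast
      linear_combination h
    have hj := (σ.symm j).isLt
    have hl := (σ.symm l).isLt
    have h2 := congrArg ZMod.val h'
    rw [ZMod.val_natCast_of_lt (by omega), ZMod.val_natCast_of_lt (by omega)] at h2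
    exact σ.symm.injective (Fin.ext (by omega))
  · intro j
    have h1 := hr1 j
    have h2 := hr2 j
    convert hb j (s + (σ.symm j : ℕ) - u j) (by omega) using 2
    rw [Nat.cast_sub h2, hub]
    push_cast
    ring
  · intro j l h
    have h' : ((2 * (σ.symm j : ℕ) + 1 : ℕ) : ZMod (2 * s + 1)) = (2 * (σ.symm l : ℕ) : ℕ) := by
      push_cast
      linear_combination h
    have hj := (σ.symm j).isLt
    have hl := (σ.symm l).isLt
    have h2 := congrArg ZMod.val h'
    rw [ZMod.val_natCast_of_lt (by omega), ZMod.val_natCast_of_lt (by omega)] at h2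
    omega
end

section
/- Let s ≥ 1 be an integer and, for each 1 ≤ i ≤ s, let V_i = {a_i, a_i+1, …, a_i+s−1} (taken modulo 2s+1) be a set of s consecutive vertices on the cycle C_{2s+1}, where a_i ∈ Z_{2s+1}. Then there exist vertices x₁, …, x_s with x_i ∈ V_i for each i, all distinct, such that the set {x₁, …, x_s} consists of s consecutive vertices on C_{2s+1}, i.e., {x₁, …, x_s} = {c, c+1, …, c+s−1} modulo 2s+1 for some c ∈ Z_{2s+1}. -/
/-!
Put `n = 2s + 1` and consider the walk `P k = k - #{(i, j) | j < k, a i = j mod n}`. Its steps are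
at most `+1` and `P (k + n) = P k + (s + 1)`, so `P` modulo `s + 1` is a function on the `n`
residues. By the discrete intermediate value property it attains each of the `s + 1` classes, and
since `n < 2 (s + 1)` some class is attained at exactly one residue `m`
(`exists_unique_level`). Between `m` and `m + n` the walk thus never takes the values
`P m` and `P m + s + 1`, hence stays strictly between them.

In terms of the offsets `d i = (a i - m) mod n` this says `#{j | d j ≤ d i} ≤ d i` and
`d i - s ≤ #{j | d j < d i}` (`exists_good_start`). So if the sets are ranked by
increasing `d`, the rank `r i` satisfies `d i - s ≤ r i < d i`, which means exactly that
`x i = m + s + r i` lies in `{a i, …, a i + s - 1}`; the `x i` fill the arc starting at `m + s`.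
-/

/-- Discrete intermediate value property for integer walks with steps at most `+1`. -/
lemma exists_hit (f : ℕ → ℤ) (hf : ∀ k, f (k + 1) ≤ f k + 1) (v : ℤ) (p q : ℕ) (hpq : p ≤ q)
    (hp : f p ≤ v) (hq : v ≤ f q) : ∃ c, p ≤ c ∧ c ≤ q ∧ f c = v := by
  induction q, hpq using Nat.le_induction with
  | base => exact ⟨p, le_rfl, le_rfl, le_antisymm hp hq⟩
  | succ q hpq ih =>
    by_cases h : v ≤ f q
    · obtain ⟨c, h1, h2, h3⟩ := ih h
      exact ⟨c, h1, by omega, h3⟩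
    · have := hf q
      exact ⟨q + 1, by omega, le_rfl, by omega⟩

/-- A walk with steps at most `+1` that gains `s + 1` over each period `2s + 1` stays strictly
between its end values over a suitably chosen period. -/
lemma exists_unique_level (s : ℕ) (P : ℕ → ℤ) (h0 : P 0 = 0) (hstep : ∀ k, P (k + 1) ≤ P k + 1)
    (hper : ∀ k, P (k + (2 * s + 1)) = P k + (s + 1)) :
    ∃ m : ℕ, ∀ k, 0 < k → k < 2 * s + 1 → P m < P (m + k) ∧ P (m + k) < P m + (s + 1) := by
  have hpos : (0 : ℤ) < s + 1 := by positivity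
  obtain ⟨y, hy, hcard⟩ := Finset.exists_card_fiber_lt_of_card_lt_mul
    (s := Finset.range (2 * s + 1)) (t := Finset.Ico (0 : ℤ) (s + 1))
    (f := fun k => P k % (s + 1)) (n := 2)
    (by simp only [Finset.card_range, Int.card_Ico]; omega)
  rw [Finset.mem_Ico] at hy
  have hn := hper 0
  rw [zero_add] at hn
  obtain ⟨m, -, hm2, hm3⟩ := exists_hit P hstep y 0 (2 * s + 1) (by omega) (by omega) (by omega)
  have hmn : m < 2 * s + 1 := by
    rcases hm2.lt_or_eq with h | h
    · exact h
    · subst h; omega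
  have huniq : ∀ j, j < 2 * s + 1 → P j % (s + 1) = y → j = m := by
    intro j hj hjy
    refine Finset.card_le_one.mp (Nat.le_of_lt_succ hcard) j ?_ m ?_
    · simp [hj, hjy]
    · simp only [Finset.mem_filter, Finset.mem_range]
      exact ⟨hmn, by rw [hm3]; exact Int.emod_eq_of_lt hy.1 hy.2⟩
  have hne : ∀ k, 0 < k → k < 2 * s + 1 → P (m + k) % (s + 1) ≠ y := by
    intro k hk hkn h
    by_cases hlt : m + k < 2 * s + 1
    · have := huniq _ hlt h
      omega
    · have h2 := hper (m + k - (2 * s + 1))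
      rw [Nat.sub_add_cancel (by omega)] at h2
      rw [h2, Int.add_emod_right] at h
      have := huniq _ (by omega) h
      omega
  have hy' : y % (s + 1) = y := Int.emod_eq_of_lt hy.1 hy.2
  refine ⟨m, fun k hk hkn => ⟨?_, ?_⟩⟩
  · by_contra hcon
    obtain ⟨c, h1, h2, h3⟩ := exists_hit P hstep y (m + k) (m + (2 * s + 1)) (by omega)
      (by omega) (by rw [hper]; omega)
    have hc : c ≠ m + (2 * s + 1) := by
      rintro rfl
      rw [hper] at h3; omega
    refine hne (c - m) (by omega) (by omega) ?_
    rw [Nat.add_sub_cancel' (by omega), h3, hy']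
  · by_contra hcon
    obtain ⟨c, h1, h2, h3⟩ := exists_hit P hstep (y + (s + 1)) m (m + k) (by omega)
      (by omega) (by omega)
    have hc : c ≠ m := by
      rintro rfl
      omega
    refine hne (c - m) (by omega) (by omega) ?_
    rw [Nat.add_sub_cancel' (by omega), h3, Int.add_emod_right, hy']

lemma sum_card_eq_card_val_lt {s n : ℕ} [NeZero n] (a : Fin s → ZMod n) (M : ZMod n) (k : ℕ)
    (hk : k ≤ n) :
    ∑ j ∈ Finset.range k, (Finset.univ.filter fun i => a i = M + (j : ZMod n)).card
      = (Finset.univ.filter fun i => (a i - M).val < k).card := by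
  rw [Finset.card_eq_sum_card_fiberwise (f := fun i => (a i - M).val) (t := Finset.range k)
    (by intro i hi; simpa using hi)]
  refine Finset.sum_congr rfl fun j hj => ?_
  rw [Finset.mem_range] at hj
  congr 1
  ext i
  simp only [Finset.mem_filter, Finset.mem_univ, true_and]
  constructor
  · intro h
    have : (a i - M).val = j := by
      rw [h, add_sub_cancel_left, ZMod.val_natCast, Nat.mod_eq_of_lt (by omega)]
    exact ⟨by omega, this⟩
  · rintro ⟨-, h⟩
    rw [← h, ZMod.natCast_zmod_val]
    ring

/-- The starting point `M` relative to which the offsets `(a i - M).val` satisfy both counting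
bounds needed to place the sets in sorted order. -/
lemma exists_good_start (s : ℕ) (a : Fin s → ZMod (2 * s + 1)) :
    ∃ M : ZMod (2 * s + 1), ∀ k : ℕ, k ≤ 2 * s →
      (Finset.univ.filter fun i => (a i - M).val < k + 1).card ≤ k ∧
      k ≤ s + (Finset.univ.filter fun i => (a i - M).val < k).card := by
  set N : ℕ → ℕ := fun j => (Finset.univ.filter fun i => a i = (j : ZMod (2 * s + 1))).card
    with hN
  set P : ℕ → ℤ := fun k => k - ((∑ j ∈ Finset.range k, N j : ℕ) : ℤ) with hP
  have hadd : ∀ m k : ℕ, k ≤ 2 * s + 1 → P (m + k) = P m + k -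
      ((Finset.univ.filter fun i => (a i - (m : ZMod (2 * s + 1))).val < k).card : ℤ) := by
    intro m k hk
    rw [← sum_card_eq_card_val_lt a _ k hk]
    simp only [hP, hN, Finset.sum_range_add, Nat.cast_add]
    ring
  have hall : ∀ m : ZMod (2 * s + 1),
      (Finset.univ.filter fun i => (a i - m).val < 2 * s + 1).card = s := by
    intro m
    rw [Finset.filter_true_of_mem fun i _ => ZMod.val_lt _]
    simp
  have hper : ∀ k, P (k + (2 * s + 1)) = P k + (s + 1) := by
    intro k
    rw [hadd k _ le_rfl, hall]
    push_cast
    ring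
  obtain ⟨m, hm⟩ := exists_unique_level s P (by simp [hP])
    (by
      intro k
      have := hadd k 1 (by omega)
      omega) hper
  refine ⟨m, fun k hk => ⟨?_, ?_⟩⟩
  · rcases hk.lt_or_eq with h | h
    · have h1 := hadd m (k + 1) (by omega)
      have h2 := (hm (k + 1) (by omega) (by omega)).1
      omega
    · rw [h, hall]; omega
  · rcases Nat.eq_zero_or_pos k with h | h
    · omega
    · have h1 := hadd m k (by omega)
      have h2 := (hm k h (by omega)).2
      omega

/-- If `V i = {a i, a i + 1, …, a i + s - 1}` (mod `2s+1`) are `s` sets of `s`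
consecutive vertices on the cycle `C_{2s+1}`, then one can pick distinct
vertices `x i ∈ V i` whose union is itself a set of `s` consecutive vertices
`{c, c+1, …, c+s-1}` on `C_{2s+1}`. -/
theorem rainbow_consecutive_sets_in_odd_cycle
    (s : ℕ) (hs : 1 ≤ s)
    (a : Fin s → ZMod (2 * s + 1)) :
    ∃ x : Fin s → ZMod (2 * s + 1),
      Function.Injective x ∧
      (∀ i, x i ∈ Finset.image (fun t : Fin s => a i + ((t : ℕ) : ZMod (2 * s + 1)))
        Finset.univ) ∧
      ∃ c : ZMod (2 * s + 1),
        Finset.image x Finset.univ =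
          Finset.image (fun t : Fin s => c + ((t : ℕ) : ZMod (2 * s + 1))) Finset.univ := by
  obtain ⟨M, hM⟩ := exists_good_start s a
  set d : Fin s → ℕ := fun i => (a i - M).val with hd
  set σ := Tuple.sort d with hσ
  have hmono : Monotone (d ∘ σ) := Tuple.monotone_sort d
  have hdlt : ∀ i, d i ≤ 2 * s := fun i => Nat.le_of_lt_succ (ZMod.val_lt _)
  -- In sorted order the first `q + 1` offsets are at most `d (σ q)`.
  have hup : ∀ q : Fin s, (q : ℕ) < d (σ q) := by
    intro q
    have h1 := (hM (d (σ q)) (hdlt _)).1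
    have h2 : ((Finset.Iic q).map σ.toEmbedding).card ≤
        (Finset.univ.filter fun i => (a i - M).val < d (σ q) + 1).card := by
      refine Finset.card_le_card fun i hi => ?_
      simp only [Finset.mem_map, Finset.mem_Iic] at hi
      obtain ⟨p, hp, rfl⟩ := hi
      simpa using Nat.lt_succ_of_le (hmono hp)
    rw [Finset.card_map, Fin.card_Iic] at h2
    omega
  -- Every offset smaller than `d (σ q)` comes before position `q`.
  have hlo : ∀ q : Fin s, d (σ q) ≤ s + q := by
    intro q
    have h1 := (hM (d (σ q)) (hdlt _)).2
    have h2 : (Finset.univ.filter fun i => (a i - M).val < d (σ q)).card ≤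
        ((Finset.Iio q).map σ.toEmbedding).card := by
      refine Finset.card_le_card fun i hi => ?_
      simp only [Finset.mem_filter, Finset.mem_univ, true_and] at hi
      simp only [Finset.mem_map, Finset.mem_Iio]
      refine ⟨σ.symm i, ?_, by simp⟩
      by_contra hcon
      have := hmono (not_lt.mp hcon)
      simp only [Function.comp_apply, Equiv.apply_symm_apply] at this
      exact absurd hi (not_lt.mpr this)
    rw [Finset.card_map, Fin.card_Iio] at h2
    omega
  refine ⟨fun i => M + s + ((σ.symm i : Fin s) : ℕ), ?_, ?_, M + s, ?_⟩
  · intro i j hij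
    have h := congrArg ZMod.val (add_left_cancel hij)
    have hi := (σ.symm i).2
    have hj := (σ.symm j).2
    rw [ZMod.val_natCast, ZMod.val_natCast, Nat.mod_eq_of_lt (by omega),
      Nat.mod_eq_of_lt (by omega)] at h
    exact σ.symm.injective (Fin.ext h)
  · intro i
    obtain ⟨q, rfl⟩ := σ.surjective i
    have h1 := hup q
    have h2 := hlo q
    refine Finset.mem_image.mpr ⟨⟨s + q - d (σ q), by omega⟩, Finset.mem_univ _, ?_⟩
    have h3 : a (σ q) = M + (d (σ q) : ZMod (2 * s + 1)) := by
      rw [hd, ZMod.natCast_zmod_val]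
      ring
    simp only [Equiv.symm_apply_apply]
    rw [h3, Nat.cast_sub h2, Nat.cast_add]
    ring
  · ext z
    simp only [Finset.mem_image, Finset.mem_univ, true_and]
    exact σ.symm.surjective.exists
      (p := fun t : Fin s => M + s + ((t : ℕ) : ZMod (2 * s + 1)) = z) |>.symm
end

section
/- Let s ≥ 1 be an integer and define f : Z_{2s+1} → Z_{2s+1} by f(j) = 2j − 1 (mod 2s+1). Then f is a bijection, and for every independent set I of size s in the cycle C_{2s+1}, the preimage f^{-1}(I) is a set of s consecutive vertices on C_{2s+1}, i.e., f^{-1}(I) = {a, a+1, …, a+s−1} modulo 2s+1 for some a ∈ Z_{2s+1}. -/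
/-!
Since `I` is independent, `I` and its translate `I + 1` are disjoint, so together they cover all
but one of the `2s + 1` vertices; call the missing vertex `c`. A vertex `x ≠ c` whose predecessor
is not in `I` must then lie in `I`. Starting from `c ∉ I`, this gives
`c + 1, c + 3, …, c + 2s - 1 ∈ I` (`odd_steps_mem`). These are the images under `j ↦ 2j - 1` of
the `s` consecutive vertices `a, …, a + s - 1`, where `2a - 1 = c + 1`; as the preimage of `I`
also has `s` elements, it equals that block.
-/

/-- The inverse of `2` modulo `2s + 1` is `s + 1`. -/
lemma two_mul_sub_one_bijective (s : ℕ) :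
    Function.Bijective (fun j : ZMod (2 * s + 1) => 2 * j - 1) := by
  have h0 : (2 * s + 1 : ZMod (2 * s + 1)) = 0 := by
    exact_mod_cast ZMod.natCast_self (2 * s + 1)
  refine Finite.injective_iff_bijective.mp fun x y hxy => ?_
  linear_combination (s + 1 : ZMod (2 * s + 1)) * hxy - (x - y) * h0

lemma natCast_ne_zero_of_lt {s k : ℕ} (h0 : 0 < k) (hk : k < 2 * s + 1) :
    (k : ZMod (2 * s + 1)) ≠ 0 := by
  rw [Ne, ZMod.natCast_eq_zero_iff]
  exact Nat.not_dvd_of_pos_of_lt h0 hk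

/-- An independent set of size `s` and its translate by `1` miss exactly one vertex `c`; hence
every `x ≠ c` lies in `I` unless its predecessor does. -/
lemma exists_uncovered {s : ℕ} (I : Finset (ZMod (2 * s + 1))) (hc : I.card = s)
    (hI : ∀ x ∈ I, x + 1 ∉ I) :
    ∃ c, c ∉ I ∧ ∀ x, x ≠ c → x - 1 ∉ I → x ∈ I := by
  have hdisj : Disjoint I (I.image (· + 1)) := by
    rw [Finset.disjoint_right]
    intro x hx
    obtain ⟨y, hy, rfl⟩ := Finset.mem_image.mp hx
    exact hI y hy
  have hcard : (I ∪ I.image (· + 1))ᶜ.card = 1 := by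
    rw [Finset.card_compl, Finset.card_union_of_disjoint hdisj,
      Finset.card_image_of_injective _ (add_left_injective 1), ZMod.card, hc]
    omega
  obtain ⟨c, hcU⟩ := Finset.card_eq_one.mp hcard
  have key : ∀ x, x ∉ I ∪ I.image (· + 1) ↔ x = c := fun x => by
    rw [← Finset.mem_compl, hcU, Finset.mem_singleton]
  refine ⟨c, fun h => (key c).mpr rfl (Finset.mem_union_left _ h), fun x hx hx1 => ?_⟩
  rcases Finset.mem_union.mp (not_not.mp (mt (key x).mp hx)) with h | h
  · exact h
  · obtain ⟨y, hy, rfl⟩ := Finset.mem_image.mp h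
    exact absurd (by simpa using hy) hx1

lemma odd_steps_mem {s : ℕ} {I : Finset (ZMod (2 * s + 1))} (hI : ∀ x ∈ I, x + 1 ∉ I)
    {c : ZMod (2 * s + 1)} (hcI : c ∉ I) (hcov : ∀ x, x ≠ c → x - 1 ∉ I → x ∈ I) (t : ℕ)
    (ht : t < s) : c + 1 + 2 * (t : ZMod (2 * s + 1)) ∈ I := by
  have hne : c + 1 + 2 * (t : ZMod (2 * s + 1)) ≠ c := fun h =>
    natCast_ne_zero_of_lt (s := s) (k := 2 * t + 1) (by omega) (by omega)
      (by push_cast; linear_combination h)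
  refine hcov _ hne ?_
  cases t with
  | zero => simpa using hcI
  | succ t =>
    have h := hI _ (odd_steps_mem hI hcI hcov t (by omega))
    convert h using 2
    push_cast
    ring

/-- The map `f j = 2j - 1` on `ZMod (2s+1)` is a bijection, and for every
independent set `I` of size `s` in the cycle `C_{2s+1}` (vertex set
`ZMod (2s+1)`, with `x` adjacent to `x+1`), the preimage `f ⁻¹ I` is a set of
`s` consecutive vertices `{a, a+1, …, a+s-1}` on `C_{2s+1}`. -/
theorem preimage_of_independent_set_is_consecutive
    (s : ℕ) (hs : 1 ≤ s) :
    Function.Bijective (fun j : ZMod (2 * s + 1) => 2 * j - 1) ∧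
    ∀ I : Finset (ZMod (2 * s + 1)), I.card = s → (∀ x ∈ I, x + 1 ∉ I) →
      ∃ a : ZMod (2 * s + 1),
        (fun j : ZMod (2 * s + 1) => 2 * j - 1) ⁻¹' (I : Set (ZMod (2 * s + 1))) =
          ↑(Finset.image (fun t : Fin s => a + ((t : ℕ) : ZMod (2 * s + 1))) Finset.univ) := by
  have hbij := two_mul_sub_one_bijective s
  refine ⟨hbij, fun I hc hI => ?_⟩
  obtain ⟨c, hcI, hcov⟩ := exists_uncovered I hc hI
  obtain ⟨a, ha⟩ := hbij.surjective (c + 1)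
  simp only at ha
  refine ⟨a, ?_⟩
  have hinj : Function.Injective (fun t : Fin s => a + ((t : ℕ) : ZMod (2 * s + 1))) := by
    intro t u htu
    have h := (ZMod.natCast_eq_natCast_iff' _ _ _).mp (add_left_cancel htu)
    rw [Nat.mod_eq_of_lt (by omega), Nat.mod_eq_of_lt (by omega)] at h
    exact Fin.ext h
  symm
  -- The block is contained in the preimage, and both sets have `s` elements.
  refine Set.eq_of_subset_of_ncard_le ?_ ?_ (Set.toFinite _)
  · intro x hx
    obtain ⟨t, -, rfl⟩ := Finset.mem_image.mp (Finset.mem_coe.mp hx)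
    have h := odd_steps_mem hI hcI hcov t t.isLt
    rw [← ha] at h
    simp only [Set.mem_preimage, Finset.mem_coe]
    convert h using 1
    ring
  · rw [Set.ncard_coe_finset, Finset.card_image_of_injective _ hinj,
      Set.ncard_preimage_of_injective_subset_range hbij.injective
        (by rw [hbij.surjective.range_eq]; exact Set.subset_univ _),
      Set.ncard_coe_finset, hc]
    simp
end

section
/- Let s ≥ 1 be an integer, let a₁ ≤ a₂ ≤ … ≤ a_s be integers, and let k be an integer such that k ≢ a_j − 1 − j (mod 2s+1) for all 1 ≤ j ≤ s. If k > a_i − 1 − i for some index 1 ≤ i ≤ s, then k > a_j − 1 − j for all 1 ≤ j ≤ i. -/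
/-! Put `b j = a j - 1 - j`. Monotonicity of `a` gives `b j ≤ b (j + 1) + 1`, so `b (j + 1) < k`
forces `b j ≤ k`, and equality is excluded because `k` is not congruent to `b j`.
The claim follows by descending induction from `i`. -/

/-- Claim 1(1): with `a₁ ≤ … ≤ a_s` integers and `k` incongruent to every
`a_j - 1 - j` mod `2s+1`, if `k > a_i - 1 - i` then `k > a_j - 1 - j` for all
`j ≤ i` (index `i : Fin s` represents `i+1`). -/
theorem claim1_part1
    (s : ℕ) (hs : 1 ≤ s) (a : Fin s → ℤ) (hmono : Monotone a) (k : ℤ)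
    (hcong : ∀ j : Fin s, ¬ (k ≡ a j - 1 - ((j : ℕ) + 1) [ZMOD (2 * s + 1)]))
    (i : Fin s) (hi : a i - 1 - ((i : ℕ) + 1) < k) :
    ∀ j : Fin s, j ≤ i → a j - 1 - ((j : ℕ) + 1) < k := by
  have key : ∀ n : ℕ, ∀ j : Fin s, (j : ℕ) + n = i → a j - 1 - ((j : ℕ) + 1) < k := by
    intro n
    induction n with
    | zero =>
      intro j hj
      obtain rfl : j = i := Fin.ext hj
      exact hi
    | succ n ih =>
      intro j hj
      have hlt : (j : ℕ) + 1 < s := by have := i.isLt; omega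
      have hnext := ih ⟨j + 1, hlt⟩ (by simp only; omega)
      have hle : a j ≤ a ⟨j + 1, hlt⟩ := hmono (Fin.le_def.mpr (Nat.le_succ _))
      have hne : k ≠ a j - 1 - ((j : ℕ) + 1) := fun h => hcong j (congrArg (· % _) h)
      push_cast at hnext
      omega
  intro j hj
  exact key (i - j) j (Nat.add_sub_cancel' hj)
end

section
/- Let s ≥ 1 be an integer, let a₁ ≤ a₂ ≤ … ≤ a_s be integers, and let k be an integer such that k ≢ a_j + s − j (mod 2s+1) for all 1 ≤ j ≤ s. If k > a_i + s − i for some index 1 ≤ i ≤ s, then k > a_j + s − j for all 1 ≤ j ≤ i. -/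
/-!
Write `b j = a j + s - (j + 1)`. Monotonicity of `a` gives `b j ≤ b (j + 1) + 1`, so `b (j + 1) < k`
forces `b j ≤ k`, and equality is excluded by the incongruence hypothesis. The claim follows by
descending from `i` one index at a time.
-/

/-- Claim 1(2): with `a₁ ≤ … ≤ a_s` integers and `k` incongruent to every
`a_j + s - j` mod `2s+1`, if `k > a_i + s - i` then `k > a_j + s - j` for all
`j ≤ i` (index `i : Fin s` represents `i+1`). -/
theorem claim1_part2
    (s : ℕ) (hs : 1 ≤ s) (a : Fin s → ℤ) (hmono : Monotone a) (k : ℤ)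
    (hcong : ∀ j : Fin s, ¬ (k ≡ a j + s - ((j : ℕ) + 1) [ZMOD (2 * s + 1)]))
    (i : Fin s) (hi : a i + s - ((i : ℕ) + 1) < k) :
    ∀ j : Fin s, j ≤ i → a j + s - ((j : ℕ) + 1) < k := by
  -- Induction on the distance `d = i - j`.
  have key : ∀ d : ℕ, ∀ j : Fin s, (j : ℕ) + d = i → a j + s - ((j : ℕ) + 1) < k := by
    intro d
    induction d with
    | zero =>
      intro j hj
      obtain rfl : j = i := Fin.ext hj
      exact hi
    | succ d ih =>
      intro j hj
      have hlt : (j : ℕ) + 1 < s := by have := i.isLt; omega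
      have hnext := ih ⟨j + 1, hlt⟩ (by simp only; omega)
      have hle : a j ≤ a ⟨j + 1, hlt⟩ := hmono (Fin.le_def.mpr (Nat.le_succ _))
      have hne : k ≠ a j + s - ((j : ℕ) + 1) := fun h => hcong j (h ▸ Int.ModEq.refl _)
      push_cast at hnext
      omega
  intro j hj
  exact key (i - j) j (Nat.add_sub_cancel' hj)
end

section
/- Let s ≥ 1 be an integer, let a₁ ≤ a₂ ≤ … ≤ a_s be integers, and let k be an integer such that k ≢ a_j − 1 − j (mod 2s+1) for all 1 ≤ j ≤ s. If k < a_i − 1 − i for some index 1 ≤ i ≤ s, then k < a_j − 1 − j for all i ≤ j ≤ s. -/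
/-- Claim 1(3): with `a₁ ≤ … ≤ a_s` integers and `k` incongruent to every
`a_j - 1 - j` mod `2s+1`, if `k < a_i - 1 - i` then `k < a_j - 1 - j` for all
`j ≥ i` (index `i : Fin s` represents `i+1`). -/
theorem claim1_part3
    (s : ℕ) (hs : 1 ≤ s) (a : Fin s → ℤ) (hmono : Monotone a) (k : ℤ)
    (hcong : ∀ j : Fin s, ¬ (k ≡ a j - 1 - ((j : ℕ) + 1) [ZMOD (2 * s + 1)]))
    (i : Fin s) (hi : k < a i - 1 - ((i : ℕ) + 1)) :
    ∀ j : Fin s, i ≤ j → k < a j - 1 - ((j : ℕ) + 1) := by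
  -- Write `b j = a j - 1 - (j + 1)`. Monotonicity of `a` gives `b (j + 1) ≥ b j - 1`, so from
  -- `k < b j` one gets `k ≤ b (j + 1)`, and equality is excluded by the incongruence hypothesis.
  suffices h : ∀ n : ℕ, (i : ℕ) ≤ n → ∀ hn : n < s, k < a ⟨n, hn⟩ - 1 - ((n : ℤ) + 1) from
    fun j hij => h j hij j.isLt
  intro n hin
  induction n, hin using Nat.le_induction with
  | base => exact fun _ => hi
  | succ n _ ih =>
    intro hn
    have hlt := ih (by omega)
    have hle : a ⟨n, by omega⟩ ≤ a ⟨n + 1, hn⟩ := hmono (Fin.mk_le_mk.2 (Nat.le_succ n))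
    have hne : k ≠ a ⟨n + 1, hn⟩ - 1 - (((n + 1 : ℕ) : ℤ) + 1) := fun he =>
      hcong ⟨n + 1, hn⟩ (congrArg (· % (2 * (s : ℤ) + 1)) he)
    push_cast at hne ⊢
    omega
end

section
/- Let s ≥ 1 be an integer, let a₁, …, a_s be integers with 1 = a₁ ≤ a₂ ≤ … ≤ a_s ≤ 2s+1, and let k be an integer with 0 ≤ k ≤ 2s such that for all 1 ≤ i ≤ s, k ≢ a_i − 1 − i (mod 2s+1) and k ≢ a_i + s − i (mod 2s+1). Suppose k < a₁ + s − 1. Then the set R = {i : 1 ≤ i ≤ s and k > a_i − 1 − i} is nonempty; let r = max R. Moreover: (i) for every 1 ≤ i ≤ r, a_i − 1 < k + i < a_i + s; (ii) for every r+1 ≤ i ≤ s, a_i − 1 − (2s+1) < k + i − s < a_i + s − (2s+1); consequently, for every i, the vertex of Z_{2s+1} represented by k+i (if i ≤ r) or by k+i−s (if i > r) lies in V_i = {a_i, a_i+1, …, a_i+s−1} (mod 2s+1), and the union {k+i−s : r+1 ≤ i ≤ s} ∪ {k+i : 1 ≤ i ≤ r} (mod 2s+1) consists of s consecutive vertices on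 C_{2s+1}. -/
/-!
The proof is a discrete intermediate value argument. For a constant `c`, the quantity
`k + i - a_i - c` grows by at most one when `i` grows by one, because `a` is monotone. If it never
vanishes, then once it is negative it stays negative (`neg_of_neg`). The two congruence conditions
say that it never vanishes for `c = -1`, `c = s` and `c = -s - 1 = s - (2s+1)`:

* `c = s`: it is negative at the first index since `k < s`, hence everywhere; this is the upper
  bound in (i).
* `c = -1`: it is positive at `r`, hence at every `i ≤ r`; this is the lower bound in (i). Beyond `r`
  it is nonpositive by maximality of `r`, hence negative; this is the upper bound in (ii).
* `c = -s - 1`: it is nonnegative at the last index since `a_s ≤ 2s+1` and `0 ≤ k`, hence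
  positive everywhere; this is the lower bound in (ii).

The bounds place the selected vertices in the `V_i`. The vertices `k + i - s` for `i > r` run from
`k + r + 1 - s` to `k`, and the vertices `k + i` for `i ≤ r` continue from `k + 1` to `k + r`.
-/

/-- Discrete intermediate value principle: `i ↦ k + i - a_i - c` rises by at most one per step, so
it cannot pass from negative to positive without vanishing. -/
lemma neg_of_neg {s : ℕ} {a : Fin s → ℤ} (hmono : Monotone a) (k c : ℤ)
    (hne : ∀ i : Fin s, k + ((i : ℕ) + 1) ≠ a i + c) {i j : Fin s} (hij : i ≤ j)
    (hi : k + ((i : ℕ) + 1) < a i + c) : k + ((j : ℕ) + 1) < a j + c := by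
  obtain ⟨i, his⟩ := i
  obtain ⟨j, hjs⟩ := j
  have hij' : i ≤ j := hij
  clear hij
  induction j, hij' using Nat.le_induction with
  | base => exact hi
  | succ n hn ih =>
    have h1 := ih (by omega)
    have h2 : a ⟨n, by omega⟩ ≤ a ⟨n + 1, hjs⟩ := hmono (Fin.mk_le_mk.2 (Nat.le_succ n))
    have h3 := hne ⟨n + 1, hjs⟩
    push_cast at h1 h3 ⊢
    omega

/-- An integer in `[x, x + s)` reduces to a member of the arc of length `s` starting at `x`. -/
lemma cast_mem_arc {s m : ℕ} {x y : ℤ} (h1 : x ≤ y) (h2 : y < x + s) :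
    (y : ZMod m) ∈ Finset.image
      (fun t : Fin s => ((x : ZMod m) + ((t : ℕ) : ZMod m))) Finset.univ := by
  obtain ⟨t, rfl⟩ := Int.le.dest h1
  refine Finset.mem_image.2 ⟨⟨t, by omega⟩, Finset.mem_univ _, ?_⟩
  push_cast
  rfl

/-- Case 1 of the proof of Theorem 2. Let `1 = a₁ ≤ … ≤ a_s ≤ 2s+1`, and let
`0 ≤ k ≤ 2s` be incongruent mod `2s+1` to every `a_i - 1 - i` and every
`a_i + s - i`.  Assume `k < a₁ + s - 1`.  Then the set
`R = {i : k > a_i - 1 - i}` is nonempty; with `r = max R`: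
(i) for `i ≤ r`, `a_i - 1 < k + i < a_i + s`;
(ii) for `i > r`, `a_i - 1 - (2s+1) < k + i - s < a_i + s - (2s+1)`;
consequently each selected vertex (`k+i` for `i ≤ r`, `k+i-s` for `i > r`,
read in `ZMod (2s+1)`) lies in `V_i = {a_i, …, a_i + s - 1}`, and together the
selected vertices form `s` consecutive vertices on `C_{2s+1}`.
(Index `i : Fin s` represents `i+1`.) -/
theorem theorem2_case1
    (s : ℕ) (hs : 1 ≤ s) (a : Fin s → ℤ) (hmono : Monotone a)
    (hfirst : a ⟨0, hs⟩ = 1) (hlast : a ⟨s - 1, by omega⟩ ≤ 2 * s + 1)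
    (k : ℤ) (hk0 : 0 ≤ k) (hk2 : k ≤ 2 * s)
    (hcong : ∀ i : Fin s,
      ¬ (k ≡ a i - 1 - ((i : ℕ) + 1) [ZMOD (2 * s + 1)]) ∧
      ¬ (k ≡ a i + s - ((i : ℕ) + 1) [ZMOD (2 * s + 1)]))
    (hcase : k < a ⟨0, hs⟩ + s - 1) :
    ∃ hR : (Finset.filter (fun i : Fin s => a i - 1 - ((i : ℕ) + 1) < k)
        Finset.univ).Nonempty,
      let r := (Finset.filter (fun i : Fin s => a i - 1 - ((i : ℕ) + 1) < k)
        Finset.univ).max' hR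
      (∀ i : Fin s, i ≤ r →
          a i - 1 < k + ((i : ℕ) + 1) ∧ k + ((i : ℕ) + 1) < a i + s) ∧
      (∀ i : Fin s, r < i →
          a i - 1 - (2 * s + 1) < k + ((i : ℕ) + 1) - s ∧
          k + ((i : ℕ) + 1) - s < a i + s - (2 * s + 1)) ∧
      (∀ i : Fin s,
          (if i ≤ r then ((k + ((i : ℕ) + 1) : ℤ) : ZMod (2 * s + 1))
            else ((k + ((i : ℕ) + 1) - s : ℤ) : ZMod (2 * s + 1))) ∈
            Finset.image
              (fun t : Fin s => ((a i : ZMod (2 * s + 1)) + ((t : ℕ) : ZMod (2 * s + 1))))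
              Finset.univ) ∧
      (∃ c : ZMod (2 * s + 1),
          Finset.image
            (fun i : Fin s =>
              if i ≤ r then ((k + ((i : ℕ) + 1) : ℤ) : ZMod (2 * s + 1))
              else ((k + ((i : ℕ) + 1) - s : ℤ) : ZMod (2 * s + 1)))
            Finset.univ =
          Finset.image (fun t : Fin s => c + ((t : ℕ) : ZMod (2 * s + 1)))
            Finset.univ) := by
  have hne1 : ∀ i : Fin s, k + ((i : ℕ) + 1) ≠ a i + (-1) := fun i h =>
    (hcong i).1 (by rw [show k = a i - 1 - ((i : ℕ) + 1) by omega])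
  have hne2 : ∀ i : Fin s, k + ((i : ℕ) + 1) ≠ a i + s := fun i h =>
    (hcong i).2 (by rw [show k = a i + s - ((i : ℕ) + 1) by omega])
  have hne3 : ∀ i : Fin s, k + ((i : ℕ) + 1) ≠ a i + (-s - 1) := fun i h =>
    (hcong i).2 ((Int.modEq_iff_dvd).2 ⟨1, by omega⟩)
  have hR : (Finset.filter (fun i : Fin s => a i - 1 - ((i : ℕ) + 1) < k)
      Finset.univ).Nonempty :=
    ⟨⟨0, hs⟩, by
      rw [Finset.mem_filter]
      refine ⟨Finset.mem_univ _, ?_⟩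
      rw [hfirst]
      push_cast
      omega⟩
  refine ⟨hR, ?_⟩
  intro r
  have hr : a r - 1 - ((r : ℕ) + 1) < k := (Finset.mem_filter.1 (Finset.max'_mem _ hR)).2
  have hmax : ∀ i : Fin s, r < i → k ≤ a i - 1 - ((i : ℕ) + 1) := by
    intro i hi
    by_contra! h
    exact absurd (Finset.le_max' _ i (Finset.mem_filter.2 ⟨Finset.mem_univ _, h⟩)) (not_le.2 hi)
  clear_value r
  have hi : ∀ i : Fin s, i ≤ r →
      a i - 1 < k + ((i : ℕ) + 1) ∧ k + ((i : ℕ) + 1) < a i + s := by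
    intro i hir
    constructor
    · by_contra! h
      have h1 := hne1 i
      have h2 := neg_of_neg hmono k (-1) hne1 hir (by omega)
      omega
    · refine neg_of_neg hmono k s hne2 (i := ⟨0, hs⟩) (Fin.mk_le_mk.2 (Nat.zero_le _)) ?_
      push_cast
      omega
  have hii : ∀ i : Fin s, r < i →
      a i - 1 - (2 * s + 1) < k + ((i : ℕ) + 1) - s ∧
      k + ((i : ℕ) + 1) - s < a i + s - (2 * s + 1) := by
    intro i hir
    constructor
    · by_contra! h
      have h1 := hne3 i
      have h2 := neg_of_neg hmono k (-s - 1) hne3 (i := i) (j := ⟨s - 1, by omega⟩)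
        (Fin.mk_le_mk.2 (by omega)) (by omega)
      push_cast [Nat.cast_sub hs] at h2
      omega
    · have h1 := hne1 i
      have h2 := hmax i hir
      omega
  refine ⟨hi, hii, ?_, ?_⟩
  · intro i
    split_ifs with h
    · exact cast_mem_arc (by linarith [(hi i h).1]) (hi i h).2
    · obtain ⟨h1, h2⟩ := hii i (not_le.1 h)
      -- Shifting by `2s+1` brings the representative `k + i - s` into `[a_i, a_i + s)`.
      have h3 : ((k + ((i : ℕ) + 1) - s : ℤ) : ZMod (2 * s + 1)) =
          ((k + ((i : ℕ) + 1) - s + ((2 * s + 1 : ℕ) : ℤ) : ℤ) : ZMod (2 * s + 1)) := by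
        rw [Int.cast_add _ ((2 * s + 1 : ℕ) : ℤ), Int.cast_natCast, ZMod.natCast_self, add_zero]
      rw [h3]
      exact cast_mem_arc (by push_cast; omega) (by push_cast; omega)
  -- `r` is zero-based, so `k + r + 1 - s` for the one-based index reads `k + r + 2 - s` here.
  · refine ⟨((k + (r : ℕ) + 2 - s : ℤ) : ZMod (2 * s + 1)), ?_⟩
    have hrs := r.isLt
    apply Finset.Subset.antisymm
    · intro x hx
      obtain ⟨i, -, rfl⟩ := Finset.mem_image.1 hx
      have his := i.isLt
      split_ifs with h
      · have h' : (i : ℕ) ≤ r := h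
        exact cast_mem_arc (by omega) (by omega)
      · have h' : (r : ℕ) < i := not_le.1 h
        exact cast_mem_arc (by omega) (by omega)
    · intro x hx
      obtain ⟨t, -, rfl⟩ := Finset.mem_image.1 hx
      have hts := t.isLt
      rw [Finset.mem_image]
      -- The first `s - (r + 1)` vertices of the arc come from the indices above `r`.
      by_cases h : (t : ℕ) + r + 1 < s
      · refine ⟨⟨t + r + 1, h⟩, Finset.mem_univ _, ?_⟩
        rw [if_neg (not_le.2 (Fin.lt_def.2 (by simp only; omega)))]
        push_cast
        ring
      · refine ⟨⟨t + r + 1 - s, by omega⟩, Finset.mem_univ _, ?_⟩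
        rw [if_pos (Fin.le_def.2 (by simp only; omega))]
        push_cast [Nat.cast_sub (not_lt.1 h)]
        ring
end

section
/- Let s ≥ 1 be an integer, let a₁, …, a_s be integers with 1 = a₁ ≤ a₂ ≤ … ≤ a_s ≤ 2s+1, and let k be an integer with 0 ≤ k ≤ 2s such that for all 1 ≤ i ≤ s, k ≢ a_i − 1 − i (mod 2s+1) and k ≢ a_i + s − i (mod 2s+1). Suppose k > a₁ + s − 1. Then the set R = {i : 1 ≤ i ≤ s and k > a_i + s − i} is nonempty; let r = max R. Moreover: (i) for every r+1 ≤ i ≤ s, a_i − 1 < k + i < a_i + s; (ii) for every 1 ≤ i ≤ r, a_i − 1 + (2s+1) < k + s + i < a_i + s + (2s+1); consequently, for every i, the vertex of Z_{2s+1} represented by k+i (if i > r) or by k+s+i (if i ≤ r) lies in V_i = {a_i, a_i+1, …, a_i+s−1} (mod 2s+1), and the union {k+i : r+1 ≤ i ≤ s} ∪ {k+s+i : 1 ≤ i ≤ r} (mod 2s+1) consists of s consecutive vertices on C_{2s+1}. -/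
/-!
Put `b i = a i - i` with `i` counted from `1`. Since `a` is monotone, `b` drops by at most `1` at each
step, so a translate of `b` that avoids the value `k` and is once above `k` stays above `k`
(`lt_of_avoid`, a discrete intermediate value principle). The congruence hypotheses say that `k` is
avoided by `b - 1`, `b + s` and `b + 2s = (b - 1) + (2s + 1)`, and the principle is applied to each:

* `b - 1` stays below `k`, because its last value is at most `s < k`;
* `b + 2s` stays above `k`, because its first value is `2s ≥ k`;
* `b + s` is below `k` at `r`, hence at every index up to `r`, and it is above `k` after `r` by
  maximality of `r`.

These are the inequalities (i) and (ii). The selected vertices are then `k + r + 1, …, k + s`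
followed by `k + s + 1, …, k + s + r`, which are `s` consecutive ones.
-/

/-- Discrete intermediate value principle: `i ↦ a i + d - (i + 1)` drops by at most `1` per step, so it
cannot pass from above `k` to below `k` without taking the value `k`. -/
lemma lt_of_avoid {s : ℕ} {a : Fin s → ℤ} (hmono : Monotone a) {k d : ℤ}
    (hne : ∀ i : Fin s, k ≠ a i + d - ((i : ℕ) + 1)) {i j : Fin s} (hij : i ≤ j)
    (hi : k < a i + d - ((i : ℕ) + 1)) : k < a j + d - ((j : ℕ) + 1) := by
  obtain ⟨j, hj⟩ := j
  induction j with
  | zero =>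
    have : i = ⟨0, hj⟩ := le_antisymm hij (Fin.mk_le_of_le_val (Nat.zero_le _))
    exact this ▸ hi
  | succ n ih =>
    rcases hij.eq_or_lt with rfl | hlt
    · exact hi
    · have hlt' : (i : ℕ) < n + 1 := hlt
      have h1 := ih (by omega) (Fin.mk_le_of_le_val (by simp; omega))
      have h2 : a ⟨n, by omega⟩ ≤ a ⟨n + 1, hj⟩ := hmono (Fin.mk_le_mk.2 (by omega))
      have h3 := hne ⟨n + 1, hj⟩
      push_cast at *
      omega

/-- Case 2 of the proof of Theorem 2. Let `1 = a₁ ≤ … ≤ a_s ≤ 2s+1`, and let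
`0 ≤ k ≤ 2s` be incongruent mod `2s+1` to every `a_i - 1 - i` and every
`a_i + s - i`.  Assume `k > a₁ + s - 1`.  Then the set
`R = {i : k > a_i + s - i}` is nonempty; with `r = max R`:
(i) for `i > r`, `a_i - 1 < k + i < a_i + s`;
(ii) for `i ≤ r`, `a_i - 1 + (2s+1) < k + s + i < a_i + s + (2s+1)`;
consequently each selected vertex (`k+i` for `i > r`, `k+s+i` for `i ≤ r`,
read in `ZMod (2s+1)`) lies in `V_i = {a_i, …, a_i + s - 1}`, and together the
selected vertices form `s` consecutive vertices on `C_{2s+1}`.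
(Index `i : Fin s` represents `i+1`.) -/
theorem theorem2_case2
    (s : ℕ) (hs : 1 ≤ s) (a : Fin s → ℤ) (hmono : Monotone a)
    (hfirst : a ⟨0, hs⟩ = 1) (hlast : a ⟨s - 1, by omega⟩ ≤ 2 * s + 1)
    (k : ℤ) (hk0 : 0 ≤ k) (hk2 : k ≤ 2 * s)
    (hcong : ∀ i : Fin s,
      ¬ (k ≡ a i - 1 - ((i : ℕ) + 1) [ZMOD (2 * s + 1)]) ∧
      ¬ (k ≡ a i + s - ((i : ℕ) + 1) [ZMOD (2 * s + 1)]))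
    (hcase : a ⟨0, hs⟩ + s - 1 < k) :
    ∃ hR : (Finset.filter (fun i : Fin s => a i + s - ((i : ℕ) + 1) < k)
        Finset.univ).Nonempty,
      let r := (Finset.filter (fun i : Fin s => a i + s - ((i : ℕ) + 1) < k)
        Finset.univ).max' hR
      (∀ i : Fin s, r < i →
          a i - 1 < k + ((i : ℕ) + 1) ∧ k + ((i : ℕ) + 1) < a i + s) ∧
      (∀ i : Fin s, i ≤ r →
          a i - 1 + (2 * s + 1) < k + s + ((i : ℕ) + 1) ∧
          k + s + ((i : ℕ) + 1) < a i + s + (2 * s + 1)) ∧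
      (∀ i : Fin s,
          (if i ≤ r then ((k + s + ((i : ℕ) + 1) : ℤ) : ZMod (2 * s + 1))
            else ((k + ((i : ℕ) + 1) : ℤ) : ZMod (2 * s + 1))) ∈
            Finset.image
              (fun t : Fin s => ((a i : ZMod (2 * s + 1)) + ((t : ℕ) : ZMod (2 * s + 1))))
              Finset.univ) ∧
      (∃ c : ZMod (2 * s + 1),
          Finset.image
            (fun i : Fin s =>
              if i ≤ r then ((k + s + ((i : ℕ) + 1) : ℤ) : ZMod (2 * s + 1))
              else ((k + ((i : ℕ) + 1) : ℤ) : ZMod (2 * s + 1)))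
            Finset.univ =
          Finset.image (fun t : Fin s => c + ((t : ℕ) : ZMod (2 * s + 1)))
            Finset.univ) := by
  have hfirst_le : ∀ i : Fin s, (⟨0, hs⟩ : Fin s) ≤ i := fun i => Fin.mk_le_of_le_val (Nat.zero_le _)
  have hle_last : ∀ i : Fin s, i ≤ (⟨s - 1, by omega⟩ : Fin s) := fun i =>
    Fin.mk_le_mk.2 (by have := i.2; omega)
  have hne_low : ∀ i : Fin s, k ≠ a i + (-1) - ((i : ℕ) + 1) := fun i h =>
    (hcong i).1 (by rw [h, ← sub_eq_add_neg])
  have hne_mid : ∀ i : Fin s, k ≠ a i + s - ((i : ℕ) + 1) := fun i h =>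
    (hcong i).2 (by rw [← h])
  have hne_high : ∀ i : Fin s, k ≠ a i + (2 * s) - ((i : ℕ) + 1) := fun i h =>
    (hcong i).1 (Int.modEq_iff_dvd.2 ⟨-1, by rw [h]; ring⟩)
  have hlow : ∀ i : Fin s, a i + (-1) - ((i : ℕ) + 1) < k := by
    intro i
    by_contra hcon
    have h := lt_of_avoid hmono hne_low (hle_last i)
      (lt_of_le_of_ne (not_lt.1 hcon) (hne_low i))
    have hcast : ((s - 1 : ℕ) : ℤ) = s - 1 := by omega
    simp only [hcast] at h
    omega
  have hhigh : ∀ i : Fin s, k < a i + (2 * s) - ((i : ℕ) + 1) := by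
    intro i
    refine lt_of_avoid hmono hne_high (hfirst_le i) (lt_of_le_of_ne ?_ (hne_high _))
    simp only [hfirst]
    push_cast
    omega
  have hR : (Finset.filter (fun i : Fin s => a i + s - ((i : ℕ) + 1) < k)
      Finset.univ).Nonempty := ⟨⟨0, hs⟩, by simpa using hcase⟩
  refine ⟨hR, ?_⟩
  intro r
  have hr : a r + s - ((r : ℕ) + 1) < k := (Finset.mem_filter.1 (Finset.max'_mem _ hR)).2
  have hmax : ∀ i : Fin s, r < i → k < a i + s - ((i : ℕ) + 1) := by
    intro i hi
    refine lt_of_le_of_ne (not_lt.1 fun h => ?_) (hne_mid i)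
    exact absurd (Finset.le_max' _ i (Finset.mem_filter.2 ⟨Finset.mem_univ _, h⟩)) (not_le.2 hi)
  have hmid : ∀ i : Fin s, i ≤ r → a i + s - ((i : ℕ) + 1) < k := by
    intro i hi
    by_contra hcon
    exact lt_asymm hr
      (lt_of_avoid hmono hne_mid hi (lt_of_le_of_ne (not_lt.1 hcon) (hne_mid i)))
  have h1 : ∀ i : Fin s, r < i →
      a i - 1 < k + ((i : ℕ) + 1) ∧ k + ((i : ℕ) + 1) < a i + s := by
    intro i hi
    have := hlow i
    have := hmax i hi
    constructor <;> omega
  have h2 : ∀ i : Fin s, i ≤ r →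
      a i - 1 + (2 * s + 1) < k + s + ((i : ℕ) + 1) ∧
      k + s + ((i : ℕ) + 1) < a i + s + (2 * s + 1) := by
    intro i hi
    have := hhigh i
    have := hmid i hi
    constructor <;> omega
  clear_value r
  have hN : (2 * (s : ZMod (2 * s + 1)) + 1) = 0 := by
    exact_mod_cast ZMod.natCast_self (2 * s + 1)
  refine ⟨h1, h2, ?_, ?_⟩
  · intro i
    rw [Finset.mem_image]
    split_ifs with hi
    · obtain ⟨hl, hu⟩ := h2 i hi
      obtain ⟨t, ht⟩ := Int.eq_ofNat_of_zero_le
        (show 0 ≤ k + s + ((i : ℕ) + 1) - (a i + (2 * s + 1)) by omega)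
      refine ⟨⟨t, by omega⟩, Finset.mem_univ _, ?_⟩
      rw [show k + s + ((i : ℕ) + 1) = a i + t + (2 * s + 1) by omega]
      push_cast
      rw [hN, add_zero]
    · obtain ⟨hl, hu⟩ := h1 i (not_le.1 hi)
      obtain ⟨t, ht⟩ := Int.eq_ofNat_of_zero_le
        (show 0 ≤ k + ((i : ℕ) + 1) - a i by omega)
      refine ⟨⟨t, by omega⟩, Finset.mem_univ _, ?_⟩
      rw [show k + ((i : ℕ) + 1) = a i + t by omega]
      push_cast
      rfl
  · -- `r : Fin s` stands for `r + 1`, so the first selected vertex is `k + r + 2`.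
    refine ⟨((k + (r : ℕ) + 2 : ℤ) : ZMod (2 * s + 1)), ?_⟩
    have hrs := r.2
    ext x
    simp only [Finset.mem_image, Finset.mem_univ, true_and]
    constructor
    · rintro ⟨i, rfl⟩
      have his := i.2
      split_ifs with hi
      · have hi' : (i : ℕ) ≤ r := hi
        refine ⟨⟨s - 1 - r + i, by omega⟩, ?_⟩
        rw [show k + s + ((i : ℕ) + 1) = k + (r : ℕ) + 2 + ((s - 1 - r + i : ℕ) : ℤ) by omega]
        push_cast
        rfl
      · have hi' : (r : ℕ) < i := not_le.1 hi
        refine ⟨⟨i - r - 1, by omega⟩, ?_⟩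
        rw [show k + ((i : ℕ) + 1) = k + (r : ℕ) + 2 + ((i - r - 1 : ℕ) : ℤ) by omega]
        push_cast
        rfl
    · rintro ⟨t, rfl⟩
      have hts := t.2
      by_cases ht : (t : ℕ) + r + 1 < s
      · refine ⟨⟨t + r + 1, ht⟩, ?_⟩
        rw [if_neg (by rw [Fin.le_def]; simp only; omega)]
        push_cast
        ring
      · obtain ⟨m, hm⟩ := Nat.exists_eq_add_of_le (not_lt.1 ht)
        refine ⟨⟨m, by omega⟩, ?_⟩
        rw [if_pos (by rw [Fin.le_def]; simp only; omega),
          show k + s + (((⟨m, by omega⟩ : Fin s) : ℕ) + 1) = k + (r : ℕ) + 2 + ((t : ℕ) : ℤ) by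
            simp only; omega]
        push_cast
        rfl
end
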